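/- Let x ∈ R^d with x ≠ 0, u ∈ R^d, C > 0, let A ∈ R^{d×d} be a symmetric positive semidefinite matrix, and let B ∈ R^{d×d} satisfy the Moore–Penrose conditions A B A = A, B A B = B, (A B)^⊤ = A B, and (B A)^⊤ = B A. If x does NOT lie in the range of A, then x^⊤ (I − B A) x > 0 and the point w* = u − (τ_C(u^⊤ x) / (x^⊤ (I − B A) x)) · (I − B A) x satisfies |w*^⊤ x| ≤ C and ‖w* − u‖_A = 0; in particular w* minimizes ‖w − u‖_A over {w ∈ R^d : |w^⊤ x| ≤ C}. -/

import Mathlib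

open Matrix

/-- `τ_C(y) = sgn(y) · max(|y| - C, 0)`, where `sgn(a) = 1` if `a ≥ 0` and `-1` otherwise. -/
noncomputable def tauC (C y : ℝ) : ℝ := (if 0 ≤ y then (1 : ℝ) else -1) * max (|y| - C) 0

/-!
The matrix `P = 1 - B * A` is the orthogonal projection onto the kernel of `A`, whose orthogonal
complement is the row space of `A`, that is, the range of `A` when `A` is symmetric. If `x` is not
in the row space then `P x ≠ 0` and `xᵀ P x = ‖P x‖² > 0`. Hence moving `u` along `P x` changes
`uᵀ x` to any prescribed value without changing `A u`; the step in `w*` replaces `uᵀ x` by its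
projection onto `[-C, C]`.
-/

theorem sub_tauC (C y : ℝ) :
    y - tauC C y = (if 0 ≤ y then 1 else -1) * min C |y| := by
  have hsign : (if 0 ≤ y then 1 else -1) * |y| = y := by
    split_ifs with hy
    · rw [abs_of_nonneg hy, one_mul]
    · rw [abs_of_neg (not_le.mp hy), neg_one_mul, neg_neg]
  calc y - tauC C y = (if 0 ≤ y then 1 else -1) * (|y| - max (|y| - C) 0) := by
        rw [mul_sub, hsign, tauC]
    _ = (if 0 ≤ y then 1 else -1) * min C |y| := by
        rw [← min_sub_sub_left, sub_sub_cancel, sub_zero]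

theorem abs_sub_tauC_le {C : ℝ} (hC : 0 ≤ C) (y : ℝ) : |y - tauC C y| ≤ C := by
  have hsign : |if 0 ≤ y then (1 : ℝ) else -1| = 1 := by split_ifs <;> simp
  rw [sub_tauC, abs_mul, hsign, one_mul, abs_of_nonneg (le_min hC (abs_nonneg y))]
  exact min_le_left C |y|

theorem sub_div_smul_dotProduct {n K : Type*} [Fintype n] [Field K] {x v : n → K}
    (hxv : x ⬝ᵥ v ≠ 0) (u : n → K) (t : K) :
    (u - (t / (x ⬝ᵥ v)) • v) ⬝ᵥ x = u ⬝ᵥ x - t := by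
  rw [sub_dotProduct, smul_dotProduct, dotProduct_comm v x, smul_eq_mul, div_mul_cancel₀ t hxv]

section SymmetricIdempotent

variable {n R : Type*} [Fintype n] {P : Matrix n n R}

theorem dotProduct_mulVec_of_isSymm_of_isIdempotentElem [CommSemiring R]
    (hsymm : P.IsSymm) (hidem : IsIdempotentElem P) (x : n → R) :
    x ⬝ᵥ P *ᵥ x = (P *ᵥ x) ⬝ᵥ (P *ᵥ x) := by
  calc x ⬝ᵥ P *ᵥ x = x ⬝ᵥ P *ᵥ (P *ᵥ x) := by rw [mulVec_mulVec, hidem.eq]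
    _ = x ⬝ᵥ Pᵀ *ᵥ (P *ᵥ x) := by rw [hsymm.eq]
    _ = (P *ᵥ x) ⬝ᵥ (P *ᵥ x) := dotProduct_transpose_mulVec P x (P *ᵥ x)

theorem dotProduct_mulVec_pos_of_isSymm_of_isIdempotentElem
    [CommRing R] [LinearOrder R] [IsStrictOrderedRing R]
    (hsymm : P.IsSymm) (hidem : IsIdempotentElem P) {x : n → R} (hx : P *ᵥ x ≠ 0) :
    0 < x ⬝ᵥ P *ᵥ x := by
  rw [dotProduct_mulVec_of_isSymm_of_isIdempotentElem hsymm hidem]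
  have hnonneg : 0 ≤ (P *ᵥ x) ⬝ᵥ (P *ᵥ x) := Finset.sum_nonneg fun i _ ↦ mul_self_nonneg _
  exact hnonneg.lt_of_ne' (mt dotProduct_self_eq_zero.mp hx)

end SymmetricIdempotent

section GeneralizedInverse

variable {m n R : Type*} [Fintype m] [Fintype n] [DecidableEq n]
  {A : Matrix m n R} {B : Matrix n m R}

theorem mul_one_sub_mul_eq_zero [Ring R] (hABA : A * B * A = A) : A * (1 - B * A) = 0 := by
  rw [Matrix.mul_sub, Matrix.mul_one, ← Matrix.mul_assoc, hABA, sub_self]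

theorem isIdempotentElem_one_sub_mul [Ring R] (hABA : A * B * A = A) :
    IsIdempotentElem (1 - B * A) := by
  have hBA : IsIdempotentElem (B * A) := by
    rw [IsIdempotentElem, Matrix.mul_assoc, ← Matrix.mul_assoc A, hABA]
  exact hBA.one_sub

theorem mem_range_transpose_of_one_sub_mul_mulVec_eq_zero [CommRing R]
    (hBA : (B * A).IsSymm) {x : n → R} (hx : (1 - B * A) *ᵥ x = 0) :
    x ∈ Set.range Aᵀ.mulVec := by
  have hfixed : x = (B * A) *ᵥ x := by
    rwa [sub_mulVec, one_mulVec, sub_eq_zero] at hx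
  refine ⟨Bᵀ *ᵥ x, ?_⟩
  rw [mulVec_mulVec, ← transpose_mul, hBA.eq, ← hfixed]

theorem dotProduct_one_sub_mul_mulVec_pos [CommRing R] [LinearOrder R] [IsStrictOrderedRing R]
    (hABA : A * B * A = A) (hBA : (B * A).IsSymm) {x : n → R}
    (hx : x ∉ Set.range Aᵀ.mulVec) :
    0 < x ⬝ᵥ (1 - B * A) *ᵥ x :=
  dotProduct_mulVec_pos_of_isSymm_of_isIdempotentElem (isSymm_one.sub hBA)
    (isIdempotentElem_one_sub_mul hABA)
    (mt (mem_range_transpose_of_one_sub_mul_mulVec_eq_zero hBA) hx)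

end GeneralizedInverse

theorem projection_pseudoinverse_not_range_general
    {m n : Type*} [Fintype m] [Fintype n] [DecidableEq n] {C : ℝ} (hC : 0 ≤ C)
    {A : Matrix m n ℝ} {B : Matrix n m ℝ} (hABA : A * B * A = A) (hBA : (B * A).IsSymm)
    {x u w : n → ℝ} (hx : x ∉ Set.range Aᵀ.mulVec)
    (hw : w = u - (tauC C (u ⬝ᵥ x) / (x ⬝ᵥ (1 - B * A) *ᵥ x)) • (1 - B * A) *ᵥ x) :
    0 < x ⬝ᵥ (1 - B * A) *ᵥ x ∧ |w ⬝ᵥ x| ≤ C ∧ A *ᵥ (w - u) = 0 := by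
  have hpos := dotProduct_one_sub_mul_mulVec_pos hABA hBA hx
  refine ⟨hpos, ?_, ?_⟩
  · rw [hw, sub_div_smul_dotProduct hpos.ne']
    exact abs_sub_tauC_le hC _
  · rw [hw, sub_sub_cancel_left, mulVec_neg, mulVec_smul, mulVec_mulVec,
      mul_one_sub_mul_eq_zero hABA, zero_mulVec, smul_zero, neg_zero]

/-- **Projection with pseudoinverse, out-of-range case.** Let `A` be symmetric PSD and `B`
its Moore–Penrose pseudoinverse. If `x ≠ 0` does not lie in the column space of `A`, then
`xᵀ(I − BA)x > 0`, and `w* = u − (τ_C(uᵀx) / (xᵀ(I − BA)x)) • (I − BA)x` satisfies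
`|w*ᵀx| ≤ C` and `‖w* − u‖_A = 0`; in particular it minimizes `‖w − u‖_A` over
`{w : |wᵀx| ≤ C}`. -/
theorem projection_pseudoinverse_not_range
    (d : ℕ) (x u : Fin d → ℝ) (hx : x ≠ 0) (C : ℝ) (hC : 0 < C)
    (A B : Matrix (Fin d) (Fin d) ℝ) (hA : A.PosSemidef)
    (hB1 : A * B * A = A) (hB2 : B * A * B = B)
    (hB3 : (A * B)ᵀ = A * B) (hB4 : (B * A)ᵀ = B * A)
    (hxrange : x ∉ Set.range A.mulVec)
    (wstar : Fin d → ℝ)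
    (hws : wstar = u - (tauC C (u ⬝ᵥ x) /
        (x ⬝ᵥ ((1 : Matrix (Fin d) (Fin d) ℝ) - B * A).mulVec x)) •
        ((1 : Matrix (Fin d) (Fin d) ℝ) - B * A).mulVec x) :
    0 < x ⬝ᵥ ((1 : Matrix (Fin d) (Fin d) ℝ) - B * A).mulVec x ∧
    |wstar ⬝ᵥ x| ≤ C ∧
    Real.sqrt ((wstar - u) ⬝ᵥ A.mulVec (wstar - u)) = 0 ∧
    (∀ w : Fin d → ℝ, |w ⬝ᵥ x| ≤ C →
      Real.sqrt ((wstar - u) ⬝ᵥ A.mulVec (wstar - u)) ≤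
        Real.sqrt ((w - u) ⬝ᵥ A.mulVec (w - u))) := by
  have hrow : x ∉ Set.range Aᵀ.mulVec := by rwa [(isHermitian_iff_isSymm.mp hA.1).eq]
  obtain ⟨hpos, hle, hker⟩ := projection_pseudoinverse_not_range_general hC.le hB1 hB4 hrow hws
  exact ⟨hpos, hle, by simp [hker], fun w _ ↦ by simp [hker]⟩
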